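/- arXiv:2308.03748 — 2 statements merged into one kernel-verified Lean document; each statement's English description precedes it below -/
import Mathlib

section
/- Let n ≥ 1 and N = 2^n + 3. An n-element set A of positive integers is sumset-distinct modulo N if and only if there exist an integer λ coprime to N and signs ε_0, ε_1, …, ε_{n-1} ∈ {1, -1} such that the image of A in ℤ/Nℤ equals { ε_i · λ · 2^i (mod N) : 0 ≤ i ≤ n-1 }. -/
/-- An `n`-element set `A` of positive integers is *sumset-distinct modulo `N`*
if all subset sums (including the empty sum) are pairwise distinct modulo `N`. -/
def SumsetDistinctMod (N : ℕ) (A : Finset ℕ) : Prop :=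
  ∀ B ⊆ A, ∀ C ⊆ A, (∑ x ∈ B, x) % N = (∑ x ∈ C, x) % N → B = C

open Filter Topology

lemma coef_bound (s : ℝ) (h1 : 1 ≤ s) (h2 : s ≤ 2) (m : ℕ) :
    |((m:ℝ)+1)^(-s) - (m:ℝ)^(-s)| ≤ 4 / ((m:ℝ)+1)^2 := by
  rcases Nat.eq_zero_or_pos m with rfl | hm
  · have : -s ≠ 0 := by linarith
    simp [Real.zero_rpow this]
  have hm' : (1:ℝ) ≤ m := by exact_mod_cast hm
  have hm0 : (0:ℝ) < m := by linarith
  set x : ℝ := m / (m+1) with hx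
  have hx0 : 0 < x := by positivity
  have hx1 : x ≤ 1 := by rw [hx, div_le_one (by positivity)]; linarith
  have e1 : ((m:ℝ)+1)^(-s) = (m:ℝ)^(-s) * x^s := by
    rw [hx, Real.div_rpow hm0.le (by positivity), Real.rpow_neg hm0.le, Real.rpow_neg (by positivity)]
    have : (m:ℝ)^s ≠ 0 := by positivity
    field_simp
  have e2 : x^2 ≤ x^s := by
    rw [← Real.rpow_natCast x 2]
    exact Real.rpow_le_rpow_of_exponent_ge hx0 hx1 (by exact_mod_cast h2)
  have e3 : x^s ≤ 1 := Real.rpow_le_one hx0.le hx1 (by linarith)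
  have e4 : (m:ℝ)^(-s) ≤ (m:ℝ)⁻¹ := by
    rw [← Real.rpow_neg_one]
    exact Real.rpow_le_rpow_of_exponent_le hm' (by linarith)
  have e5 : 0 ≤ (m:ℝ)^(-s) := by positivity
  rw [e1, abs_sub_comm, abs_of_nonneg (by nlinarith)]
  calc (m:ℝ)^(-s) - (m:ℝ)^(-s) * x^s = (m:ℝ)^(-s) * (1 - x^s) := by ring
    _ ≤ (m:ℝ)⁻¹ * (1 - x^2) := by
        apply mul_le_mul e4 (by linarith) (by linarith) (by positivity)
    _ ≤ _ := by
        rw [hx]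
        have : (m:ℝ)⁻¹ * (1 - (m/(m+1))^2) = (2 * m + 1) / (m * (m+1)^2) := by
          field_simp; ring
        rw [this, div_le_div_iff₀ (by positivity) (by positivity)]
        have : 0 < ((m:ℝ)+1)^2 := by positivity
        nlinarith

lemma summ_bound : Summable (fun m : ℕ => 4 / ((m:ℝ)+1)^2) := by
  have := (summable_nat_add_iff 1).2 (Real.summable_one_div_nat_pow.2 (by norm_num : 1 < 2))
  simpa [div_eq_mul_inv] using this.mul_left 4

/-- summation by parts -/
lemma parts (z : ℂ) (f : ℕ → ℂ) (f0 : f 0 = 0) (hs : Summable (fun m => z^m * f m)) :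
    (1 - z) * ∑' m, z^m * f m = ∑' m, z^(m+1) * (f (m+1) - f m) := by
  have h1 : ∑' m, z^m * f m = ∑' m, z^(m+1) * f (m+1) := by
    rw [hs.tsum_eq_zero_add, f0]; simp
  have hs1 : Summable (fun m => z^(m+1) * f (m+1)) := (summable_nat_add_iff 1).2 hs
  have h2 : z * ∑' m, z^m * f m = ∑' m, z^(m+1) * f m := by
    rw [← tsum_mul_left]; congr 1; ext m; ring
  have hs2 : Summable (fun m => z^(m+1) * f m) := by
    refine (hs.mul_left z).congr fun m => by ring
  rw [sub_mul, one_mul, h2, h1, ← hs1.tsum_sub hs2]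
  congr 1; ext m; ring

lemma lim_series (z : ℂ) (hz : ‖z‖ = 1) (hz1 : z ≠ 1) :
    Tendsto (fun s : ℝ => ∑' m : ℕ, z^m * (((m:ℝ)^(-s) : ℝ) : ℂ)) (𝓝[>] 1)
      (𝓝 (-Complex.log (1 - z))) := by
  have hne : 1 - z ≠ 0 := sub_ne_zero.2 (Ne.symm hz1)
  set L : ℂ := ∑' m : ℕ, z^(m+1) * ((((m:ℝ)+1)^(-(1:ℝ)) - (m:ℝ)^(-(1:ℝ)) : ℝ) : ℂ) with hL
  have A : Tendsto (fun s : ℝ => ∑' m : ℕ, z^(m+1) * ((((m:ℝ)+1)^(-s) - (m:ℝ)^(-s) : ℝ) : ℂ))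
      (𝓝[>] 1) (𝓝 L) := by
    refine tendsto_tsum_of_dominated_convergence summ_bound (fun m => ?_) ?_
    · refine (Tendsto.const_mul _ ?_)
      refine (Complex.continuous_ofReal.tendsto _).comp ?_
      refine Tendsto.mono_left ?_ nhdsWithin_le_nhds
      have hneg : Tendsto (fun s : ℝ => -s) (𝓝 1) (𝓝 (-1)) := tendsto_id.neg
      refine Tendsto.sub ?_ ?_
      · exact (tendsto_const_nhds.rpow hneg (Or.inl (by positivity)))
      · rcases Nat.eq_zero_or_pos m with rfl | hm
        · have : ∀ᶠ s : ℝ in 𝓝 1, (0:ℝ) = ((0:ℕ):ℝ)^(-s) := by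
            filter_upwards [lt_mem_nhds (zero_lt_one)] with s hs
            have : -s ≠ 0 := by linarith
            simp [Real.zero_rpow this]
          refine Tendsto.congr' this ?_
          simp [Real.zero_rpow]
        · exact (tendsto_const_nhds.rpow hneg (Or.inl (by positivity)))
    · have : ∀ᶠ s : ℝ in 𝓝[>] 1, s ∈ Set.Ioc (1:ℝ) 2 := Ioc_mem_nhdsGT (by norm_num)
      filter_upwards [this] with s hs m
      rw [norm_mul, norm_pow, hz, one_pow, one_mul, Complex.norm_real, Real.norm_eq_abs]
      exact coef_bound s hs.1.le hs.2 m
  have B : Tendsto (fun r : ℝ => ∑' m : ℕ, ((r:ℂ) * z)^(m+1) *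
        ((((m:ℝ)+1)^(-(1:ℝ)) - (m:ℝ)^(-(1:ℝ)) : ℝ) : ℂ)) (𝓝[<] 1) (𝓝 L) := by
    refine tendsto_tsum_of_dominated_convergence summ_bound (fun m => ?_) ?_
    · refine Tendsto.mul_const _ ?_
      refine Tendsto.mono_left ?_ nhdsWithin_le_nhds
      have : Continuous (fun r : ℝ => ((r:ℂ) * z)^(m+1)) := by fun_prop
      simpa using this.tendsto 1
    · have : ∀ᶠ s : ℝ in 𝓝[<] 1, s ∈ Set.Ico (0:ℝ) 1 := Ico_mem_nhdsLT (by norm_num)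
      filter_upwards [this] with r hr m
      rw [norm_mul, norm_pow, norm_mul, hz, mul_one, Complex.norm_real, Complex.norm_real,
        Real.norm_eq_abs, Real.norm_eq_abs, abs_of_nonneg hr.1]
      have := coef_bound 1 le_rfl (by norm_num) m
      have h2 : r^(m+1) ≤ 1 := pow_le_one₀ hr.1 hr.2.le
      have h3 : 0 ≤ r^(m+1) := pow_nonneg hr.1 _
      nlinarith [abs_nonneg (((m:ℝ)+1)^(-(1:ℝ)) - (m:ℝ)^(-(1:ℝ)))]
  have C : Tendsto (fun r : ℝ => (1 - (r:ℂ) * z) * (-Complex.log (1 - r * z))) (𝓝[<] 1)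
      (𝓝 ((1 - z) * (-Complex.log (1-z)))) := by
    refine Tendsto.mono_left ?_ nhdsWithin_le_nhds
    have hc : ContinuousAt (fun r : ℝ => (1 - (r:ℂ) * z)) 1 := by fun_prop
    have hsl : (1 - ((1:ℝ):ℂ) * z) ∈ Complex.slitPlane := by
      rw [Complex.mem_slitPlane_iff]
      left
      simp only [Complex.ofReal_one, one_mul, Complex.sub_re, Complex.one_re, sub_pos]
      refine lt_of_le_of_ne (hz ▸ Complex.re_le_norm z) ?_
      intro h
      apply hz1
      have h5 := Complex.sq_norm z
      rw [Complex.normSq_apply, hz, h] at h5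
      apply Complex.ext
      · simpa using h
      · simp; nlinarith
    have := Tendsto.mul hc (Tendsto.neg (hc.clog hsl))
    simpa only [Complex.ofReal_one, one_mul] using this
  have D : (1 - z) * (-Complex.log (1-z)) = L := by
    refine tendsto_nhds_unique C (B.congr' ?_)
    have : ∀ᶠ s : ℝ in 𝓝[<] 1, s ∈ Set.Ico (0:ℝ) 1 := Ico_mem_nhdsLT (by norm_num)
    filter_upwards [this] with r hr
    have hn : ‖(r:ℂ) * z‖ < 1 := by
      rw [norm_mul, hz, mul_one, Complex.norm_real, Real.norm_eq_abs, abs_of_nonneg hr.1]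
      exact hr.2
    have h1 := Complex.hasSum_taylorSeries_neg_log hn
    have e : (fun m : ℕ => ((r:ℂ) * z)^m / m) =
        fun m : ℕ => ((r:ℂ) * z)^m * (((m:ℝ)^(-(1:ℝ)) : ℝ) : ℂ) := by
      ext m; rw [Real.rpow_neg_one]; push_cast; rw [div_eq_mul_inv]
    rw [e] at h1
    rw [← h1.tsum_eq, parts _ (fun m : ℕ => (((m:ℝ)^(-(1:ℝ)) : ℝ) : ℂ)) (by simp [Real.zero_rpow]) h1.summable]
    congr 1; ext m; push_cast; rfl
  have E : -Complex.log (1-z) = (1-z)⁻¹ * L := by rw [← D]; field_simp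
  rw [E]
  refine (A.const_mul (1-z)⁻¹).congr' ?_
  filter_upwards [self_mem_nhdsWithin] with s hs
  have hs : 1 < s := hs
  have hsum : Summable (fun m : ℕ => z^m * (((m:ℝ)^(-s) : ℝ) : ℂ)) := by
    apply Summable.of_norm
    have := Real.summable_nat_rpow.2 (show -s < -1 by linarith)
    refine this.congr fun m => ?_
    rw [norm_mul, norm_pow, hz, one_pow, one_mul, Complex.norm_real, Real.norm_eq_abs,
      abs_of_nonneg (by positivity)]
  rw [inv_mul_eq_iff_eq_mul₀ hne, parts _ (fun m : ℕ => (((m:ℝ)^(-s) : ℝ) : ℂ)) ?_ hsum]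
  · congr 1; ext m; push_cast; rfl
  · have : -s ≠ 0 := by linarith
    simp [Real.zero_rpow this]

open ZMod in
lemma std_norm {N : ℕ} [NeZero N] (j : ZMod N) : ‖stdAddChar j‖ = 1 := by
  rw [stdAddChar_apply]; exact Circle.norm_coe _

open ZMod in
lemma std_ne_one {N : ℕ} [NeZero N] {j : ZMod N} (hj : j ≠ 0) : stdAddChar j ≠ (1:ℂ) := by
  rw [← (stdAddChar (N := N)).map_zero_eq_one]
  exact fun h => hj (injective_stdAddChar h)

open ZMod in
lemma L_std {N : ℕ} [NeZero N] (j : ZMod N) (hj : j ≠ 0) :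
    LFunction (fun k => stdAddChar (j * k)) 1 = -Complex.log (1 - stdAddChar j) := by
  have h0 : ∑ k, stdAddChar (j * k) = (0:ℂ) := by
    simp only [mul_comm j, AddChar.sum_mulShift _ (isPrimitive_stdAddChar _), hj,
      ↓reduceIte, CharP.cast_eq_zero]
  have hc := (differentiable_LFunction_of_sum_zero h0).continuous
  have h1 : Tendsto (fun s : ℝ => LFunction (fun k => stdAddChar (j * k)) (s : ℂ)) (𝓝[>] 1)
      (𝓝 (LFunction (fun k => stdAddChar (j * k)) 1)) := by
    refine Tendsto.mono_left ?_ nhdsWithin_le_nhds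
    have : Continuous (fun s : ℝ => LFunction (fun k => stdAddChar (j * k)) (s : ℂ)) :=
      hc.comp Complex.continuous_ofReal
    simpa using this.tendsto 1
  refine tendsto_nhds_unique h1 ((lim_series _ (std_norm j) (std_ne_one hj)).congr' ?_)
  filter_upwards [self_mem_nhdsWithin] with s hs
  have hs : 1 < s := hs
  have hs' : 1 < (s:ℂ).re := by simpa using hs
  rw [LFunction_eq_LSeries _ hs', LSeries]
  congr 1; ext m
  rw [LSeries.term_of_ne_zero' (by exact_mod_cast (by linarith : s ≠ 0)), div_eq_mul_inv]
  congr 1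
  · rw [mul_comm, ← nsmul_eq_mul, AddChar.map_nsmul_eq_pow]
  · rw [← Complex.cpow_neg, Complex.ofReal_cpow (by positivity)]; simp

/-- log of the cyclotomic number -/
noncomputable def Flog (N : ℕ) [NeZero N] (k : ZMod N) : ℝ := Real.log ‖1 - ZMod.stdAddChar k‖

noncomputable def Psi {N : ℕ} [NeZero N] (χ : DirichletCharacter ℂ N) (k : ZMod N) : ℂ :=
  ∑ x, χ x * ZMod.stdAddChar (-(x * k))

lemma Psi_zero {N : ℕ} [NeZero N] (χ : DirichletCharacter ℂ N) (h : χ ≠ 1) : Psi χ 0 = 0 := by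
  simp [Psi, MulChar.sum_eq_zero_of_ne_one h]

lemma Psi_inv {N : ℕ} [NeZero N] (χ : DirichletCharacter ℂ N) (x : ZMod N) :
    ∑ k, Psi χ k * ZMod.stdAddChar (k * x) = N * χ x := by
  simp only [Psi, Finset.sum_mul, mul_assoc, ← AddChar.map_add_eq_mul]
  rw [Finset.sum_comm]
  simp only [← Finset.mul_sum]
  have : ∀ y : ZMod N, ∑ k, ZMod.stdAddChar (-(y*k) + k * x) = if x = y then (N:ℂ) else 0 := by
    intro y
    have := AddChar.sum_mulShift (x - y) (ZMod.isPrimitive_stdAddChar N)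
    simp only [ZMod.card, sub_eq_zero] at this
    push_cast at this
    rw [← this]
    congr 1; ext k; congr 1; ring
  simp only [this]
  simp [mul_comm]

lemma Psi_mul {N : ℕ} [NeZero N] (χ : DirichletCharacter ℂ N) (u : (ZMod N)ˣ) (k : ZMod N) :
    χ u * Psi χ (u * k) = Psi χ k := by
  simp only [Psi, Finset.mul_sum]
  refine Fintype.sum_bijective (fun x : ZMod N => (u : ZMod N) * x) (Units.mulLeft_bijective u) _ _ fun x => ?_
  rw [map_mul]
  ring_nf

lemma Psi_even {N : ℕ} [NeZero N] (χ : DirichletCharacter ℂ N) (h : χ (-1) = 1) (k : ZMod N) :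
    Psi χ (-k) = Psi χ k := by
  have := Psi_mul χ (-1) k
  simpa [h] using this

lemma L_formula {N : ℕ} [NeZero N] (χ : DirichletCharacter ℂ N) (h : χ ≠ 1) :
    N * ZMod.LFunction χ 1 = ∑ k, Psi χ k * (-Complex.log (1 - ZMod.stdAddChar k)) := by
  have h1 : N * ZMod.LFunction χ 1 =
      ∑ k, Psi χ k * ZMod.LFunction (fun x => ZMod.stdAddChar (k * x)) 1 := by
    simp only [ZMod.LFunction, Finset.mul_sum]
    rw [Finset.sum_comm]
    refine Finset.sum_congr rfl fun x _ => ?_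
    have := Psi_inv χ x
    calc _ = (N * χ x) * ((N:ℂ)^(-(1:ℂ)) * HurwitzZeta.hurwitzZeta (ZMod.toAddCircle x) 1) := by ring
      _ = _ := by
        rw [← this, Finset.sum_mul]
        refine Finset.sum_congr rfl fun k _ => by ring
  rw [h1]
  refine Finset.sum_congr rfl fun k _ => ?_
  by_cases hk : k = 0
  · simp [hk, Psi_zero χ h]
  · rw [L_std k hk]

lemma C_ne_zero {N : ℕ} [NeZero N] (χ : DirichletCharacter ℂ N) (h : χ ≠ 1) (he : χ (-1) = 1) :
    ∑ k, Psi χ k * (Flog N k : ℂ) ≠ 0 := by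
  intro h0
  have h1 := L_formula χ h
  have h2 : N * ZMod.LFunction χ 1 = ∑ k, Psi χ k * (-Complex.log (1 - ZMod.stdAddChar (-k))) := by
    rw [h1]
    refine Fintype.sum_equiv (Equiv.neg _) _ _ fun k => ?_
    simp [Psi_even χ he]
  have h3 : 2 * (N * ZMod.LFunction χ 1) = - 2 * ∑ k, Psi χ k * (Flog N k : ℂ) := by
    rw [two_mul]; nth_rw 1 [h1]; rw [h2, ← Finset.sum_add_distrib, Finset.mul_sum]
    refine Finset.sum_congr rfl fun k _ => ?_
    by_cases hk : k = 0
    · simp [hk, Psi_zero χ h]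
    have e1 : (ZMod.stdAddChar (-k) : ℂ) = starRingEnd ℂ (ZMod.stdAddChar k) := by
      rw [AddChar.map_neg_eq_conj]
    have e2 : Complex.log (1 - ZMod.stdAddChar (-k)) =
        starRingEnd ℂ (Complex.log (1 - ZMod.stdAddChar k)) := by
      rw [← Complex.log_conj, e1, map_sub, map_one]
      intro harg
      rw [Complex.arg_eq_pi_iff] at harg
      have := Complex.re_le_norm (ZMod.stdAddChar k)
      rw [std_norm] at this
      simp at harg
      linarith
    have e3 : Complex.log (1 - ZMod.stdAddChar k) + starRingEnd ℂ (Complex.log (1 - ZMod.stdAddChar k))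
        = 2 * (Flog N k : ℂ) := by
      rw [Complex.add_conj, Complex.log_re, Flog]; push_cast; rfl
    rw [e2]
    linear_combination (-Psi χ k) * e3
  rw [h0, mul_zero] at h3
  have h4 := DirichletCharacter.LFunction_apply_one_ne_zero h
  have h5 : (N:ℂ) ≠ 0 := by exact_mod_cast NeZero.ne N
  have : (2:ℂ) * (N * ZMod.LFunction χ 1) ≠ 0 := by
    refine mul_ne_zero two_ne_zero (mul_ne_zero h5 h4)
  exact this h3

lemma C_mul {N : ℕ} [NeZero N] (χ : DirichletCharacter ℂ N) (a : ZMod N) (ha : IsUnit a) :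
    ∑ k, Psi χ k * (Flog N (a * k) : ℂ) = χ a * ∑ k, Psi χ k * (Flog N k : ℂ) := by
  obtain ⟨u, rfl⟩ := ha
  rw [Finset.mul_sum]
  refine Fintype.sum_bijective (fun x : ZMod N => (u : ZMod N) * x) (Units.mulLeft_bijective u) _ _ fun x => ?_
  rw [← Psi_mul χ u x]; ring

/-- The linear independence statement. -/
lemma indep {N : ℕ} [NeZero N] (A : Finset ℕ) (w : ZMod N) (hw : IsUnit w) (h2 : IsUnit (2 : ZMod N))
    (h3 : IsUnit (3 : ZMod N)) (hA : ∀ a ∈ A, IsUnit (a : ZMod N))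
    (hrel : ∀ k : ZMod N, k ≠ 0 → ∑ a ∈ A, (Flog N (2 * a * k) - Flog N (a * k)) =
      Flog N (3 * w * k) - Flog N (w * k)) (χ : DirichletCharacter ℂ N) (he : χ (-1) = 1) :
    ∑ a ∈ A, (χ (2 * a) - χ a) = χ (3 * w) - χ w := by
  by_cases h1 : χ = 1
  · subst h1
    rw [MulChar.one_apply (h3.mul hw), MulChar.one_apply hw, sub_self]
    refine Finset.sum_eq_zero fun a ha => ?_
    rw [MulChar.one_apply (h2.mul (hA a ha)), MulChar.one_apply (hA a ha), sub_self]
  have hC := C_ne_zero χ h1 he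
  apply mul_right_cancel₀ hC
  rw [Finset.sum_mul, sub_mul, ← C_mul χ _ (h3.mul hw), ← C_mul χ _ hw, ← Finset.sum_sub_distrib]
  have : ∀ a ∈ A, (χ (2 * a) - χ a) * ∑ k, Psi χ k * (Flog N k : ℂ) =
      ∑ k, Psi χ k * ((Flog N (2 * a * k) : ℂ) - Flog N (a * k)) := by
    intro a ha
    rw [sub_mul, ← C_mul χ _ (h2.mul (hA a ha)), ← C_mul χ _ (hA a ha), ← Finset.sum_sub_distrib]
    refine Finset.sum_congr rfl fun k _ => by ring
  rw [Finset.sum_congr rfl this, Finset.sum_comm]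
  refine Finset.sum_congr rfl fun k _ => ?_
  by_cases hk : k = 0
  · simp [hk, Psi_zero χ h1]
  rw [← Finset.mul_sum, ← mul_sub]
  congr 1
  exact_mod_cast hrel k hk

noncomputable def dl {N : ℕ} (g b : ZMod N) : ℂ :=
  (if g = b then 1 else 0) + (if g = -b then 1 else 0)

lemma orth {N : ℕ} [NeZero N] (g : ZMod N) (hg : IsUnit g) (b : ZMod N) :
    ∑ χ : DirichletCharacter ℂ N, χ g⁻¹ * ((1 + χ (-1)) * χ b) = N.totient * dl g b := by
  have h1 := DirichletCharacter.sum_char_inv_mul_char_eq ℂ hg b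
  have h2 := DirichletCharacter.sum_char_inv_mul_char_eq ℂ hg (-b)
  have : ∀ χ : DirichletCharacter ℂ N, χ g⁻¹ * ((1 + χ (-1)) * χ b) =
      χ g⁻¹ * χ b + χ g⁻¹ * χ (-b) := by
    intro χ
    rw [show -b = -1 * b by ring, map_mul]; ring
  simp only [this, Finset.sum_add_distrib, h1, h2, dl]
  split_ifs <;> ring

lemma counting {N : ℕ} [NeZero N] (A : Finset ℕ) (w : ZMod N) (hw : IsUnit w) (h2 : IsUnit (2 : ZMod N))
    (h3 : IsUnit (3 : ZMod N)) (hA : ∀ a ∈ A, IsUnit (a : ZMod N))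
    (hrel : ∀ k : ZMod N, k ≠ 0 → ∑ a ∈ A, (Flog N (2 * a * k) - Flog N (a * k)) =
      Flog N (3 * w * k) - Flog N (w * k)) (g : ZMod N) (hg : IsUnit g) :
    ∑ a ∈ A, (dl g (2 * a) - dl g a) = dl g (3 * w) - dl g w := by
  have hN : (N.totient : ℂ) ≠ 0 := by
    exact_mod_cast (Nat.totient_pos.2 (NeZero.pos N)).ne'
  apply mul_left_cancel₀ hN
  simp only [Finset.mul_sum, mul_sub, ← orth g hg]
  simp only [← Finset.sum_sub_distrib, ← mul_sub]
  rw [Finset.sum_comm]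
  refine Finset.sum_congr rfl fun χ _ => ?_
  simp only [← Finset.mul_sum]
  congr 1
  have : χ (-1) = 1 ∨ χ (-1) = -1 := by
    have : χ (-1) * χ (-1) = 1 := by rw [← map_mul]; simp
    exact mul_self_eq_one_iff.1 this
  rcases this with he | ho
  · rw [indep A w hw h2 h3 hA hrel χ he]
  · simp [ho]

lemma char_sum {N : ℕ} {K : Type} [Field K] (e : AddChar (ZMod N) K) (B : Finset ℕ) :
    e (∑ x ∈ B, (x : ZMod N)) = ∏ x ∈ B, e (x : ZMod N) := by
  induction B using Finset.induction_on with
  | empty => simp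
  | insert a s ha ih => rw [Finset.sum_insert ha, Finset.prod_insert ha, AddChar.map_add_eq_mul, ih]

lemma missing (n N : ℕ) [NeZero N] (hN : N = 2 ^ n + 3) (hn : 1 ≤ n) (A : Finset ℕ) (hcard : A.card = n)
    (hA : SumsetDistinctMod N A) :
    ∃ c w : ZMod N, w ≠ 0 ∧ ∀ (K : Type) [Field K] (e : AddChar (ZMod N) K), e ≠ 1 →
      ∏ a ∈ A, (1 + e (a : ZMod N)) = -(e c * (1 + e w + e (-w))) := by
  classical
  let s : Finset ℕ → ZMod N := fun B => ((∑ x ∈ B, x : ℕ) : ZMod N)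
  have hinj : Set.InjOn s (A.powerset : Set (Finset ℕ)) := by
    intro B hB D hD h
    simp only [Finset.coe_powerset, Set.mem_preimage, Set.mem_powerset_iff, Finset.coe_subset] at hB hD
    exact hA B hB D hD ((ZMod.natCast_eq_natCast_iff' _ _ _).1 h)
  let T := A.powerset.image s
  have hT : T.card = 2 ^ n := by
    rw [Finset.card_image_of_injOn hinj, Finset.card_powerset, hcard]
  have hC : Tᶜ.card = 3 := by
    rw [Finset.card_compl, hT, ZMod.card]; omega
  have hsym : ∀ t, t ∈ Tᶜ → s A - t ∈ Tᶜ := by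
    intro t ht
    simp only [Finset.mem_compl] at ht ⊢
    intro h
    apply ht
    obtain ⟨B, hB, hBt⟩ := Finset.mem_image.1 h
    refine Finset.mem_image.2 ⟨A \ B, by simp, ?_⟩
    have h1 := Finset.sum_sdiff (f := fun x : ℕ => x) (Finset.mem_powerset.1 hB)
    have h2 : s (A \ B) + s B = s A := by
      simp only [s, ← h1]; push_cast; rfl
    rw [hBt] at h2
    linear_combination h2
  have h2cop : Nat.Coprime 2 N := by
    rw [Nat.coprime_comm, Nat.coprime_two_right, hN]
    have : Even (2^n) := (Nat.even_pow.2 ⟨even_two, by omega⟩)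
    exact this.add_odd (by decide)
  have h2u : IsUnit (2 : ZMod N) := by
    exact_mod_cast (ZMod.isUnit_iff_coprime 2 N).2 h2cop
  have hfix : ∀ x y : ZMod N, s A - x = x → s A - y = y → x = y := by
    intro x y hx hy
    apply h2u.mul_left_cancel
    linear_combination hy - hx
  have key : ∃ c w : ZMod N, w ≠ 0 ∧ Tᶜ = {c, c + w, c - w} ∧ c + w ≠ c - w := by
    have main : ∀ x y z, x ≠ y → x ≠ z → y ≠ z → Tᶜ = {x, y, z} → s A - x = x →
        ∃ c w : ZMod N, w ≠ 0 ∧ Tᶜ = {c, c + w, c - w} ∧ c + w ≠ c - w := by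
      intro x y z hxy hxz hyz hTc hx
      have hy : s A - y ∈ Tᶜ := hsym y (by rw [hTc]; simp)
      rw [hTc] at hy
      simp only [Finset.mem_insert, Finset.mem_singleton] at hy
      rcases hy with hy | hy | hy
      · exact absurd (by linear_combination hx - hy) hxy.symm
      · exact absurd (hfix x y hx hy) hxy
      · refine ⟨x, y - x, sub_ne_zero.2 hxy.symm, ?_, ?_⟩
        · have e1 : x + (y - x) = y := by ring
          have e2 : x - (y - x) = z := by linear_combination hy - hx
          rw [hTc, e1, e2]
        · have e1 : x + (y - x) = y := by ring
          have e2 : x - (y - x) = z := by linear_combination hy - hx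
          rw [e1, e2]; exact hyz
    obtain ⟨x, y, z, hxy, hxz, hyz, hTc⟩ := Finset.card_eq_three.1 hC
    have hx : s A - x ∈ Tᶜ := hsym x (by rw [hTc]; simp)
    have hy : s A - y ∈ Tᶜ := hsym y (by rw [hTc]; simp)
    have hz : s A - z ∈ Tᶜ := hsym z (by rw [hTc]; simp)
    rw [hTc] at hx hy hz
    simp only [Finset.mem_insert, Finset.mem_singleton] at hx hy hz
    rcases hx with hx | hx | hx
    · exact main x y z hxy hxz hyz hTc hx
    · have : s A - z = z := by
        rcases hz with hz | hz | hz
        · exact absurd (by linear_combination hx - hz) hyz.symm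
        · exact absurd (by linear_combination hz - hx) hxz
        · exact hz
      exact main z x y hxz.symm hyz.symm hxy (by rw [hTc]; ext; simp; tauto) this
    · have : s A - y = y := by
        rcases hy with hy | hy | hy
        · exact absurd (by linear_combination hx - hy) hyz
        · exact hy
        · exact absurd (by linear_combination hy - hx) hxy
      exact main y x z hxy.symm hyz hxz (by rw [hTc]; ext; simp; tauto) this
  obtain ⟨c, w, hw, hTc, hne⟩ := key
  refine ⟨c, w, hw, fun K _ e he => ?_⟩
  have h0 : ∑ t, e t = 0 := AddChar.sum_eq_zero_of_ne_one he
  have h1 : ∏ a ∈ A, (1 + e (a : ZMod N)) = ∑ t ∈ T, e t := by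
    rw [Finset.prod_one_add, Finset.sum_image hinj]
    refine Finset.sum_congr rfl fun B _ => ?_
    simp only [s]
    push_cast
    rw [char_sum]
  have h2 : ∑ t ∈ Tᶜ, e t = e c * (1 + e w + e (-w)) := by
    rw [hTc, Finset.sum_insert, Finset.sum_insert, Finset.sum_singleton]
    · rw [sub_eq_add_neg, AddChar.map_add_eq_mul, AddChar.map_add_eq_mul]; ring
    · simpa using hne
    · simp only [Finset.mem_insert, Finset.mem_singleton, not_or]
      constructor
      · intro h; exact hw (by linear_combination -h)
      · intro h; exact hw (by linear_combination h)
  rw [h1, ← h2]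
  have := Finset.sum_add_sum_compl T (fun t => e t)
  rw [h0] at this
  linear_combination this

lemma exist_char (N p : ℕ) [NeZero N] [Fact p.Prime] (hp : ¬ p ∣ N) (b : ZMod N) (hb : ¬ IsUnit b) :
    ∃ e : AddChar (ZMod N) (AlgebraicClosure (ZMod p)), e ≠ 1 ∧ e b = 1 := by
  have h1 : ¬ Nat.Coprime b.val N := by
    intro h
    apply hb
    have := (ZMod.isUnit_iff_coprime b.val N).2 h
    rwa [ZMod.natCast_zmod_val] at this
  obtain ⟨q, hq, hqb, hqN⟩ := Nat.Prime.not_coprime_iff_dvd.1 h1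
  have hpq : ¬ p ∣ q := by
    intro h; exact hp (h.trans hqN)
  have : NeZero ((q : ℕ) : AlgebraicClosure (ZMod p)) := by
    constructor
    intro h
    rw [CharP.cast_eq_zero_iff (AlgebraicClosure (ZMod p)) p] at h
    exact hpq h
  obtain ⟨ζ, hζ⟩ := HasEnoughRootsOfUnity.exists_primitiveRoot (AlgebraicClosure (ZMod p)) q
  have hζN : ζ ^ N = 1 := by
    obtain ⟨r, hr⟩ := hqN
    rw [hr, pow_mul, hζ.pow_eq_one, one_pow]
  have hN1 : 1 < N := lt_of_lt_of_le hq.one_lt (Nat.le_of_dvd (NeZero.pos N) hqN)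
  refine ⟨AddChar.zmodChar N hζN, ?_, ?_⟩
  · intro h
    have h2 : AddChar.zmodChar N hζN 1 = 1 := by rw [h]; rfl
    have : Fact (1 < N) := ⟨hN1⟩
    rw [AddChar.zmodChar_apply, ZMod.val_one, pow_one] at h2
    exact hζ.ne_one hq.one_lt h2
  · rw [AddChar.zmodChar_apply]
    obtain ⟨r, hr⟩ := hqb
    rw [hr, pow_mul, hζ.pow_eq_one, one_pow]

lemma char_pow {N : ℕ} [NeZero N] {K : Type} [Field K] (e : AddChar (ZMod N) K) (x : ZMod N) :
    e x ^ N = 1 := by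
  rw [← AddChar.map_nsmul_eq_pow]; simp

lemma units_of (N : ℕ) [NeZero N] (h2 : ¬ 2 ∣ N) (h3 : ¬ 3 ∣ N) (A : Finset ℕ) (c w : ZMod N)
    (H : ∀ (K : Type) [Field K] (e : AddChar (ZMod N) K), e ≠ 1 →
      ∏ a ∈ A, (1 + e (a : ZMod N)) = -(e c * (1 + e w + e (-w)))) :
    IsUnit w ∧ ∀ a ∈ A, IsUnit (a : ZMod N) := by
  constructor
  · by_contra hw
    have : Fact (Nat.Prime 3) := ⟨by norm_num⟩
    obtain ⟨e, he, hew⟩ := exist_char N 3 h3 w hw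
    have h := H _ e he
    have h30 : (3 : AlgebraicClosure (ZMod 3)) = 0 := by
      exact_mod_cast CharP.cast_eq_zero (AlgebraicClosure (ZMod 3)) 3
    rw [AddChar.map_neg_eq_inv, hew, inv_one] at h
    have h' : ∏ a ∈ A, (1 + e (a : ZMod N)) = 0 := by rw [h]; linear_combination (- e c) * h30
    obtain ⟨a, ha, h0⟩ := Finset.prod_eq_zero_iff.1 h'
    have h1 : e (a : ZMod N) = -1 := by linear_combination h0
    have h4 := char_pow e (a : ZMod N)
    rw [h1, Odd.neg_one_pow (by rw [← Nat.not_even_iff_odd, even_iff_two_dvd]; exact h2)] at h4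
    have : (1 : AlgebraicClosure (ZMod 3)) = 0 := by linear_combination h30 + h4
    exact one_ne_zero this
  · intro a ha
    by_contra hw
    have : Fact (Nat.Prime 2) := ⟨by norm_num⟩
    obtain ⟨e, he, hea⟩ := exist_char N 2 h2 _ hw
    have h := H _ e he
    have h20 : (2 : AlgebraicClosure (ZMod 2)) = 0 := by
      exact_mod_cast CharP.cast_eq_zero (AlgebraicClosure (ZMod 2)) 2
    have h0 : ∏ a ∈ A, (1 + e (a : ZMod N)) = 0 := by
      apply Finset.prod_eq_zero ha
      rw [hea]; linear_combination h20
    rw [h0] at h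
    have hec : e c ≠ 0 := by
      intro h0; have := char_pow e c; rw [h0, zero_pow (NeZero.ne N)] at this
      exact zero_ne_one this
    have hew : e w ≠ 0 := by
      intro h0; have := char_pow e w; rw [h0, zero_pow (NeZero.ne N)] at this
      exact zero_ne_one this
    have h5 : 1 + e w + e (-w) = 0 := by
      have := mul_eq_zero.1 (neg_eq_zero.1 h.symm)
      exact this.resolve_left hec
    rw [AddChar.map_neg_eq_inv] at h5
    have h6 : e w ^ 2 + e w + 1 = 0 := by
      field_simp at h5
      linear_combination h5
    have h7 : e w ^ 3 = 1 := by linear_combination (e w - 1) * h6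
    have h8 : e w ^ (Nat.gcd 3 N) = 1 := by
      rw [pow_gcd_eq_one]; exact ⟨h7, char_pow e w⟩
    rw [(Nat.Prime.coprime_iff_not_dvd (by norm_num)).2 h3, pow_one] at h8
    rw [h8] at h6
    have : (1 : AlgebraicClosure (ZMod 2)) = 0 := by linear_combination h6 - h20
    exact one_ne_zero this

lemma rel_of (N : ℕ) [NeZero N] (h2 : IsUnit (2 : ZMod N)) (h3 : IsUnit (3 : ZMod N))
    (A : Finset ℕ) (c w : ZMod N) (hw : IsUnit w) (hA : ∀ a ∈ A, IsUnit (a : ZMod N))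
    (H : ∀ (K : Type) [Field K] (e : AddChar (ZMod N) K), e ≠ 1 →
      ∏ a ∈ A, (1 + e (a : ZMod N)) = -(e c * (1 + e w + e (-w)))) (k : ZMod N) (hk : k ≠ 0) :
    ∑ a ∈ A, (Flog N (2 * a * k) - Flog N (a * k)) = Flog N (3 * w * k) - Flog N (w * k) := by
  have nz : ∀ x : ZMod N, IsUnit x → x * k ≠ 0 := fun x hx h => hk (by
    rwa [hx.mul_right_eq_zero] at h)
  have nz' : ∀ x : ZMod N, IsUnit x → ‖(1:ℂ) - ZMod.stdAddChar (x * k)‖ ≠ 0 := fun x hx =>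
    norm_ne_zero_iff.2 (sub_ne_zero.2 (std_ne_one (nz x hx)).symm)
  let e : AddChar (ZMod N) ℂ := AddChar.mulShift ZMod.stdAddChar k
  have hev : ∀ x, e x = ZMod.stdAddChar (x * k) := fun x => by
    simp only [e, AddChar.mulShift_apply, mul_comm]
  have he : e ≠ 1 := by
    intro h
    have : e 1 = 1 := by rw [h]; rfl
    rw [hev, one_mul] at this
    exact std_ne_one hk this
  have h := congrArg (fun z => Real.log ‖z‖) (H ℂ e he)
  simp only [norm_prod, norm_neg, norm_mul] at h
  have hn : ∀ x, ‖e x‖ = 1 := fun x => by rw [hev]; exact std_norm _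
  have f1 : ∀ a ∈ A, ‖1 + e (a : ZMod N)‖ * ‖1 - e (a : ZMod N)‖ = ‖1 - e (2 * (a : ZMod N))‖ := by
    intro a ha
    rw [← norm_mul, two_mul, AddChar.map_add_eq_mul]; congr 1; ring
  have f2 : ‖1 + e w + e (-w)‖ * ‖1 - e w‖ = ‖1 - e (3 * w)‖ := by
    have : (1 + e w + e (-w)) * (1 - e w) = e (-w) * (1 - e (3 * w)) := by
      have e3 : e (3 * w) = e w * e w * e w := by
        rw [← AddChar.map_add_eq_mul, ← AddChar.map_add_eq_mul]; congr 1; ring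
      have e4 : e (-w) * e w = 1 := by
        rw [← AddChar.map_add_eq_mul]; simp
      rw [e3]; linear_combination (e w * e w - 1) * e4
    rw [← norm_mul, this, norm_mul, hn, one_mul]
  have g1 : ∀ a ∈ A, ‖1 + e (a : ZMod N)‖ ≠ 0 := fun a ha h0 => by
    have := f1 a ha
    rw [h0, zero_mul, hev] at this
    exact nz' _ (h2.mul (hA a ha)) this.symm
  have g2 : ‖1 + e w + e (-w)‖ ≠ 0 := fun h0 => by
    have := f2
    rw [h0, zero_mul, hev] at this
    exact nz' _ (h3.mul hw) this.symm
  rw [Real.log_prod g1, hn, one_mul] at h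
  have L2 : Flog N (3 * w * k) - Flog N (w * k) = Real.log ‖1 + e w + e (-w)‖ := by
    simp only [Flog, ← hev]
    rw [← f2, Real.log_mul g2 (by rw [hev]; exact nz' _ hw)]; ring
  rw [L2, ← h]
  refine Finset.sum_congr rfl fun a ha => ?_
  simp only [Flog, ← hev]
  rw [← f1 a ha, Real.log_mul (g1 a ha) (by rw [hev]; exact nz' _ (hA a ha))]; ring

/-- `±2^i`, `±2^j` are distinct mod `2^n+3`. -/
lemma two_pow_ne (n N : ℕ) (hN : N = 2 ^ n + 3) (k : ℕ) (hk0 : 0 < k) (hk : k < n) :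
    (2 : ZMod N) ^ k ≠ 1 ∧ (2 : ZMod N) ^ k ≠ -1 := by
  have hlt : 2 ^ k < 2 ^ n := Nat.pow_lt_pow_right (by norm_num) hk
  have h1 : 2 ≤ 2 ^ k := by
    calc 2 = 2 ^ 1 := rfl
      _ ≤ 2 ^ k := Nat.pow_le_pow_right (by norm_num) hk0
  constructor
  · intro h
    have : ((2 ^ k - 1 : ℕ) : ZMod N) = 0 := by
      rw [Nat.cast_sub (by omega)]; push_cast; rw [h]; simp
    rw [ZMod.natCast_eq_zero_iff] at this
    have := Nat.le_of_dvd (by omega) this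
    omega
  · intro h
    have : ((2 ^ k + 1 : ℕ) : ZMod N) = 0 := by
      push_cast; rw [h]; simp
    rw [ZMod.natCast_eq_zero_iff] at this
    have := Nat.le_of_dvd (by omega) this
    omega

lemma two_pow_inj (n N : ℕ) (hN : N = 2 ^ n + 3) (h2 : IsUnit (2 : ZMod N)) (w : ZMod N)
    (hw : IsUnit w) (i j : ℕ) (hij : i < j) (hj : j < i + n) :
    (2 : ZMod N) ^ i * w ≠ 2 ^ j * w ∧ (2 : ZMod N) ^ i * w ≠ -(2 ^ j * w) := by
  obtain ⟨k, rfl⟩ := Nat.exists_eq_add_of_lt hij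
  obtain ⟨h5, h6⟩ := two_pow_ne n N hN (k + 1) (by omega) (by omega)
  have hu := (h2.pow i).mul hw
  constructor
  · intro h
    apply h5
    apply hu.mul_left_cancel
    linear_combination -h
  · intro h
    apply h6
    apply hu.mul_left_cancel
    linear_combination h


lemma dl_nonneg {N : ℕ} (g b : ZMod N) : 0 ≤ (dl g b).re := by
  unfold dl; split_ifs <;> simp <;> norm_num

lemma dl_eq_zero {N : ℕ} {g b : ZMod N} (h1 : g ≠ b) (h2 : g ≠ -b) : dl g b = 0 := by
  simp [dl, h1, h2]

lemma dl_self {N : ℕ} (g : ZMod N) : 1 ≤ (dl g g).re := by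
  unfold dl; split_ifs <;> simp at *

lemma dl_neg {N : ℕ} (g b : ZMod N) : dl g (-b) = dl g b := by
  simp [dl, add_comm]

lemma dl_two {N : ℕ} (h2 : IsUnit (2 : ZMod N)) (g b : ZMod N) : dl (2 * g) (2 * b) = dl g b := by
  have e1 : 2 * g = 2 * b ↔ g = b := h2.mul_right_inj
  have e2 : 2 * g = -(2 * b) ↔ g = -b := by rw [← mul_neg]; exact h2.mul_right_inj
  simp only [dl, e1, e2]

lemma find (n N : ℕ) [NeZero N] (hN : N = 2 ^ n + 3) (A : Finset ℕ) (w : ZMod N)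
    (hw : IsUnit w) (h2 : IsUnit (2 : ZMod N))
    (hc : ∀ g : ZMod N, IsUnit g → ∑ a ∈ A, (dl g (2 * a) - dl g a) = dl g (3 * w) - dl g w)
    (i : ℕ) (hi : i < n) : 1 ≤ (∑ a ∈ A, dl (2 ^ i * w) (a : ZMod N)).re := by
  have hnt : Fact (1 < N) := ⟨by rw [hN]; have := Nat.pos_of_ne_zero (pow_ne_zero n two_ne_zero); omega⟩
  have h3 : (3 : ZMod N) * w = -(2 ^ n * w) := by
    have : ((2 ^ n + 3 : ℕ) : ZMod N) = 0 := by rw [← hN]; simp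
    push_cast at this
    linear_combination w * this
  induction i with
  | zero =>
    have h := hc w hw
    have hz : dl w (3 * w) = 0 := by
      apply dl_eq_zero
      · intro h
        have : 2 * w = 0 := by linear_combination -h
        exact (h2.mul hw).ne_zero this
      · intro h
        have : 2 * (2 * w) = 0 := by linear_combination h
        exact (h2.mul (h2.mul hw)).ne_zero this
    rw [hz, Finset.sum_sub_distrib] at h
    have h := congrArg Complex.re h
    have hp : 0 ≤ (∑ a ∈ A, dl w (2 * (a : ZMod N))).re := by
      rw [Complex.re_sum]; exact Finset.sum_nonneg fun a _ => dl_nonneg _ _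
    have := dl_self w
    simp only [Complex.sub_re, Complex.zero_re] at h
    rw [pow_zero, one_mul]
    linarith
  | succ i ih =>
    have ih := ih (by omega)
    have h := hc (2 ^ (i+1) * w) ((h2.pow _).mul hw)
    have hz : dl (2 ^ (i+1) * w) (3 * w) = 0 := by
      rw [h3, dl_neg]
      obtain ⟨p, q⟩ := two_pow_inj n N hN h2 w hw (i+1) n hi (by omega)
      exact dl_eq_zero p q
    rw [hz, Finset.sum_sub_distrib] at h
    have e : ∀ a ∈ A, dl (2 ^ (i+1) * w) (2 * (a : ZMod N)) = dl (2 ^ i * w) a := by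
      intro a _
      rw [← dl_two h2 (2^i * w)]; congr 1; ring
    rw [Finset.sum_congr rfl e] at h
    have h := congrArg Complex.re h
    have := dl_nonneg (2 ^ (i+1) * w) w
    simp only [Complex.sub_re, Complex.zero_re] at h
    linarith

lemma image_all (n N : ℕ) (hN : N = 2 ^ n + 3) (h2 : IsUnit (2 : ZMod N)) (A : Finset ℕ)
    (hcard : A.card = n) (lam : ZMod N) (hl : IsUnit lam) (ε : ℕ → ℤ)
    (hε : ∀ i < n, ε i = 1 ∨ ε i = -1) (f : ℕ → ℕ) (hf : ∀ i < n, f i ∈ A)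
    (hv : ∀ i < n, (f i : ZMod N) = (ε i : ZMod N) * lam * 2 ^ i) :
    Set.InjOn f (Finset.range n : Set ℕ) ∧ (Finset.range n).image f = A := by
  have key : ∀ i j, i < j → j < n → f i ≠ f j := by
    intro i j hij hj h
    have h1 := hv i (by omega)
    rw [h, hv j hj] at h1
    obtain ⟨p, q⟩ := two_pow_inj n N hN h2 lam hl i j hij (by omega)
    rcases hε i (by omega) with a | a <;> rcases hε j hj with b | b <;> rw [a, b] at h1 <;>
      push_cast at h1
    · exact p (by linear_combination -h1)
    · exact q (by linear_combination -h1)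
    · exact q (by linear_combination h1)
    · exact p (by linear_combination h1)
  have hinj : Set.InjOn f (Finset.range n : Set ℕ) := by
    intro i hi j hj h
    simp only [Finset.coe_range, Set.mem_Iio] at hi hj
    rcases lt_trichotomy i j with hij | hij | hij
    · exact absurd h (key i j hij hj)
    · exact hij
    · exact absurd h.symm (key j i hij hi)
  refine ⟨hinj, Finset.eq_of_subset_of_card_le ?_ ?_⟩
  · intro x hx
    obtain ⟨i, hi, rfl⟩ := Finset.mem_image.1 hx
    exact hf i (Finset.mem_range.1 hi)
  · rw [Finset.card_image_of_injOn hinj, hcard, Finset.card_range]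

lemma digits_zero (n : ℕ) : ∀ d : ℕ → ℤ, (∀ i < n, |d i| ≤ 1) →
    ∑ i ∈ Finset.range n, d i * 2 ^ i = 0 → ∀ i < n, d i = 0 := by
  induction n with
  | zero => intro d _ _ i hi; omega
  | succ n ih =>
    intro d hd hs
    rw [Finset.sum_range_succ'] at hs
    have e : ∑ i ∈ Finset.range n, d (i+1) * 2 ^ (i+1) = 2 * ∑ i ∈ Finset.range n, d (i+1) * 2 ^ i := by
      rw [Finset.mul_sum]; refine Finset.sum_congr rfl fun i _ => by ring
    rw [e, pow_zero, mul_one] at hs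
    have h0 := abs_le.1 (hd 0 (by omega))
    have hd0 : d 0 = 0 := by omega
    have h1 := ih (fun i => d (i+1)) (fun i hi => hd (i+1) (by omega)) (by
      omega)
    intro i hi
    cases i with
    | zero => exact hd0
    | succ i => exact h1 i (by omega)

lemma digits_bound (n : ℕ) (d : ℕ → ℤ) (hd : ∀ i < n, |d i| ≤ 1) :
    |∑ i ∈ Finset.range n, d i * 2 ^ i| < 2 ^ n := by
  induction n with
  | zero => simp
  | succ n ih =>
    have h1 := abs_lt.1 (ih fun i hi => hd i (by omega))
    have h2 := abs_le.1 (hd n (by omega))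
    have h3 : (0:ℤ) < 2 ^ n := by positivity
    rw [Finset.sum_range_succ, pow_succ, abs_lt]
    constructor <;> nlinarith

theorem stmt5 (n : ℕ) (hn : 1 ≤ n) (N : ℕ) (hN : N = 2 ^ n + 3)
    (A : Finset ℕ) (hpos : ∀ a ∈ A, 0 < a) (hcard : A.card = n) :
    SumsetDistinctMod N A ↔
      ∃ lam : ℤ, Int.gcd lam N = 1 ∧ ∃ ε : ℕ → ℤ, (∀ i < n, ε i = 1 ∨ ε i = -1) ∧
        A.image (fun a : ℕ => (a : ZMod N)) =
          (Finset.range n).image (fun i => (ε i : ZMod N) * (lam : ZMod N) * 2 ^ i) := by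
  have hNZ : NeZero N := ⟨by rw [hN]; exact Nat.succ_ne_zero _⟩
  have d2 : ¬ 2 ∣ N := by
    have : 2 ∣ 2 ^ n := dvd_pow_self 2 (by omega)
    omega
  have d3 : ¬ 3 ∣ N := by
    intro h
    have h1 : 3 ∣ 2 ^ n := by omega
    have := Nat.Prime.dvd_of_dvd_pow (by norm_num) h1
    omega
  have h2 : IsUnit (2 : ZMod N) := by
    exact_mod_cast (ZMod.isUnit_iff_coprime 2 N).2 ((Nat.Prime.coprime_iff_not_dvd (by norm_num)).2 d2)
  have h3 : IsUnit (3 : ZMod N) := by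
    exact_mod_cast (ZMod.isUnit_iff_coprime 3 N).2 ((Nat.Prime.coprime_iff_not_dvd (by norm_num)).2 d3)
  constructor
  · intro hA
    obtain ⟨c, w, _, H⟩ := missing n N hN hn A hcard hA
    obtain ⟨hw, hAu⟩ := units_of N d2 d3 A c w H
    have hrel := rel_of N h2 h3 A c w hw hAu H
    have hc := counting A w hw h2 h3 hAu hrel
    have hex : ∀ i, ∃ a, i < n → a ∈ A ∧ ((2:ZMod N) ^ i * w = a ∨ (2:ZMod N) ^ i * w = -a) := by
      intro i
      by_cases hi : i < n
      · have h := find n N hN A w hw h2 hc i hi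
        by_contra! hcon
        have : ∑ a ∈ A, dl (2 ^ i * w) (a : ZMod N) = 0 := by
          refine Finset.sum_eq_zero fun a ha => ?_
          obtain ⟨p, q⟩ := (hcon a).2 ha
          exact dl_eq_zero p q
        rw [this] at h
        norm_num at h
      · exact ⟨0, fun h => absurd h hi⟩
    choose f hf using hex
    classical
    let ε : ℕ → ℤ := fun i => if (2:ZMod N) ^ i * w = f i then 1 else -1
    have hε : ∀ i < n, ε i = 1 ∨ ε i = -1 := by
      intro i _; simp only [ε]; split_ifs <;> simp
    have hv : ∀ i < n, (f i : ZMod N) = (ε i : ZMod N) * w * 2 ^ i := by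
      intro i hi
      simp only [ε]
      split_ifs with h
      · rw [← h]; push_cast; ring
      · have := ((hf i hi).2).resolve_left h
        push_cast
        linear_combination this
    have him := (image_all n N hN h2 A hcard w hw ε hε f (fun i hi => (hf i hi).1) hv).2
    refine ⟨(w.val : ℤ), ?_, ε, hε, ?_⟩
    · rw [Int.gcd_natCast_natCast]
      rw [← ZMod.natCast_zmod_val w] at hw
      exact (ZMod.isUnit_iff_coprime _ _).1 hw
    · rw [← him, Finset.image_image]
      refine Finset.image_congr fun i hi => ?_
      have := hv i (by simpa using hi)
      simpa using this
  · rintro ⟨lam, hlam, ε, hε, him⟩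
    have hl : IsUnit (lam : ZMod N) := by
      rw [ZMod.coe_int_isUnit_iff_isCoprime]
      exact (Int.isCoprime_iff_gcd_eq_one.2 hlam).symm
    have hex : ∀ i, ∃ a, i < n → a ∈ A ∧ (a : ZMod N) = (ε i : ZMod N) * lam * 2 ^ i := by
      intro i
      by_cases hi : i < n
      · have : (ε i : ZMod N) * (lam : ZMod N) * 2 ^ i ∈ A.image (fun a : ℕ => (a : ZMod N)) := by
          rw [him]; exact Finset.mem_image_of_mem _ (Finset.mem_range.2 hi)
        obtain ⟨a, ha, h⟩ := Finset.mem_image.1 this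
        exact ⟨a, fun _ => ⟨ha, h⟩⟩
      · exact ⟨0, fun h => absurd h hi⟩
    choose f hf using hex
    obtain ⟨hinj, hall⟩ := image_all n N hN h2 A hcard lam hl ε hε f (fun i hi => (hf i hi).1)
      (fun i hi => (hf i hi).2)
    classical
    have hsum : ∀ B ⊆ A, ((∑ x ∈ B, x : ℕ) : ZMod N) =
        lam * ((∑ i ∈ Finset.range n, (if f i ∈ B then ε i else 0) * 2 ^ i : ℤ) : ZMod N) := by
      intro B hB
      have : B = ((Finset.range n).filter (fun i => f i ∈ B)).image f := by
        ext x
        simp only [Finset.mem_image, Finset.mem_filter]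
        constructor
        · intro hx
          have := hB hx
          rw [← hall] at this
          obtain ⟨i, hi, rfl⟩ := Finset.mem_image.1 this
          exact ⟨i, ⟨hi, hx⟩, rfl⟩
        · rintro ⟨i, ⟨_, h⟩, rfl⟩; exact h
      push_cast
      conv_lhs => rw [this]
      rw [Finset.sum_image (fun i hi j hj h => hinj (by simpa using (Finset.mem_filter.1 hi).1)
        (by simpa using (Finset.mem_filter.1 hj).1) h), Finset.sum_filter, Finset.mul_sum]
      refine Finset.sum_congr rfl fun i hi => ?_
      split_ifs with h
      · rw [(hf i (Finset.mem_range.1 hi)).2]; ring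
      · simp
    intro B hB C hC h
    have h := (ZMod.natCast_eq_natCast_iff' _ _ N).2 h
    rw [hsum B hB, hsum C hC] at h
    have h := hl.mul_left_cancel h
    let d : ℕ → ℤ := fun i => (if f i ∈ B then ε i else 0) - (if f i ∈ C then ε i else 0)
    have hd : ∀ i < n, |d i| ≤ 1 := by
      intro i hi
      simp only [d]
      rcases hε i hi with a | a <;> rw [a] <;> split_ifs <;> simp
    have hdz : ((∑ i ∈ Finset.range n, d i * 2 ^ i : ℤ) : ZMod N) = 0 := by
      simp only [d, sub_mul, Finset.sum_sub_distrib]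
      rw [Int.cast_sub, h, sub_self]
    rw [ZMod.intCast_zmod_eq_zero_iff_dvd] at hdz
    have hb := digits_bound n d hd
    have hz : ∑ i ∈ Finset.range n, d i * 2 ^ i = 0 := by
      apply Int.eq_zero_of_abs_lt_dvd hdz
      rw [hN]; push_cast; linarith
    have h0 := digits_zero n d hd hz
    ext x
    have main : ∀ i < n, (f i ∈ B ↔ f i ∈ C) := by
      intro i hi
      have := h0 i hi
      simp only [d] at this
      rcases hε i hi with a | a <;> rw [a] at this <;> split_ifs at this <;> simp_all
    have hmem : ∀ x ∈ A, (x ∈ B ↔ x ∈ C) := by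
      intro x hx
      rw [← hall] at hx
      obtain ⟨i, hi, rfl⟩ := Finset.mem_image.1 hx
      exact main i (Finset.mem_range.1 hi)
    constructor
    · intro hx; exact (hmem x (hB hx)).1 hx
    · intro hx; exact (hmem x (hC hx)).2 hx
end

section
/- Let n ≥ 1 and N = 2^n + 1. The number of n-element subsets of {1, 2, …, N-1} that are sumset-distinct modulo N is exactly 2^n · φ(N) / (2n), where φ is Euler's totient function. -/
/-- Sumset-distinctness inside `ZMod N`. -/
def GoodZ {N : ℕ} (A : Finset (ZMod N)) : Prop :=
  ∀ B ⊆ A, ∀ C ⊆ A, (∑ x ∈ B, x) = (∑ x ∈ C, x) → B = C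

/-- `y` is a subset sum of `A`. -/
def SubSum {N : ℕ} (A : Finset (ZMod N)) (y : ZMod N) : Prop :=
  ∃ B ⊆ A, (∑ x ∈ B, x) = y

lemma GoodZ.mono {N : ℕ} {A B : Finset (ZMod N)} (h : GoodZ A) (hB : B ⊆ A) : GoodZ B :=
  fun C hC D hD => h C (hC.trans hB) D (hD.trans hB)

lemma subSum_split {N : ℕ} {A : Finset (ZMod N)} {a : ZMod N} (ha : a ∈ A) (y : ZMod N) :
    SubSum A y ↔ SubSum (A.erase a) y ∨ SubSum (A.erase a) (y - a) := by
  constructor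
  · rintro ⟨B, hB, rfl⟩
    by_cases h : a ∈ B
    · right
      refine ⟨B.erase a, Finset.erase_subset_erase _ hB, ?_⟩
      rw [← Finset.sum_erase_add B _ h]; ring
    · left
      exact ⟨B, Finset.subset_erase.2 ⟨hB, h⟩, rfl⟩
  · rintro (⟨B, hB, rfl⟩ | ⟨B, hB, h⟩)
    · exact ⟨B, hB.trans (Finset.erase_subset _ _), rfl⟩
    · obtain ⟨h1, h2⟩ := Finset.subset_erase.1 hB
      refine ⟨insert a B, Finset.insert_subset ha h1, ?_⟩
      rw [Finset.sum_insert h2, h]; ring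

lemma subSum_disj {N : ℕ} {A : Finset (ZMod N)} (hA : GoodZ A) {a : ZMod N} (ha : a ∈ A)
    (y : ZMod N) : ¬ (SubSum (A.erase a) y ∧ SubSum (A.erase a) (y - a)) := by
  rintro ⟨⟨B, hB, h⟩, ⟨C, hC, h'⟩⟩
  obtain ⟨h1, h2⟩ := Finset.subset_erase.1 hB
  obtain ⟨h3, h4⟩ := Finset.subset_erase.1 hC
  have := hA B h1 (insert a C) (Finset.insert_subset ha h3) (by
    rw [Finset.sum_insert h4, h, h']; ring)
  exact h2 (this ▸ Finset.mem_insert_self _ _)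

lemma core1 {N : ℕ} (hN : Odd N) (T : ZMod N → Prop) (a m : ZMod N)
    (h : ∀ y, y ≠ m → (T y ↔ ¬ T (y - a))) (h0 : ¬ T m) :
    IsUnit a ∧ ∀ k < N, (T (m + k * a) ↔ Odd k) := by
  have hu : IsUnit a := by
    by_contra hna
    have hne : ∀ k : ℕ, (m - 1) + k * a ≠ m := by
      intro k hk
      apply hna
      have : (k : ZMod N) * a = 1 := by linear_combination hk
      exact IsUnit.of_mul_eq_one_right _ this
    have key : ∀ k : ℕ, (T ((m - 1) + k * a) ↔ (T (m - 1) ↔ Even k)) := by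
      intro k
      induction k with
      | zero => simp
      | succ k ih =>
        rw [h _ (hne _)]
        have : m - 1 + ((k + 1 : ℕ) : ZMod N) * a - a = m - 1 + k * a := by push_cast; ring
        rw [this, ih, Nat.even_add_one]; tauto
    have := key N
    simp only [CharP.cast_eq_zero, zero_mul, add_zero] at this
    have h2 := Nat.not_even_iff_odd.2 hN
    tauto
  refine ⟨hu, ?_⟩
  intro k
  induction k with
  | zero => intro _; simpa using h0
  | succ k ih =>
    intro hk
    have hne : m + ((k + 1 : ℕ) : ZMod N) * a ≠ m := by
      intro h
      have h1 : ((k + 1 : ℕ) : ZMod N) * a = 0 := by linear_combination h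
      have h2 := (hu.mul_left_eq_zero).1 h1
      rw [ZMod.natCast_eq_zero_iff] at h2
      exact absurd (Nat.le_of_dvd (by omega) h2) (by omega)
    rw [h _ hne]
    have : m + ((k + 1 : ℕ) : ZMod N) * a - a = m + k * a := by push_cast; ring
    rw [this, ih (by omega), Nat.odd_add_one]

lemma tile (L e : ℕ) (P : ℕ → Prop) (he : 0 < e) (hL : 0 < L)
    (h1 : ∀ k < L, k < e → P k)
    (h2 : ∀ k < L, e ≤ k → (P k ↔ ¬ P (k - e)))
    (h3 : ∀ k < L, P k → k + e < L) : 2 * e ∣ L := by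
  have key : ∀ k < L, (P k ↔ Even (k / e)) := by
    intro k
    induction k using Nat.strong_induction_on with
    | _ k ih =>
      intro hk
      rcases lt_or_ge k e with hke | hke
      · simp [Nat.div_eq_of_lt hke, h1 k hk hke]
      · rw [h2 k hk hke, ih (k - e) (by omega) (by omega)]
        have : k / e = (k - e) / e + 1 := by
          rw [Nat.div_eq_sub_div he hke]
        rw [this, Nat.even_add_one]
  have heL : e < L := by simpa using h3 0 hL (h1 0 hL he)
  have hodd : ∀ k, L - e ≤ k → k < L → Odd (k / e) := by
    intro k hk hkL
    rw [← Nat.not_even_iff_odd, ← key k hkL]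
    intro hp
    have := h3 k hkL hp
    omega
  -- L = e * q + r
  have hd := Nat.div_add_mod L e
  have hr := Nat.mod_lt L he
  set q := L / e
  set r := L % e
  have hq : 1 ≤ q := (Nat.one_le_div_iff he).2 heL.le
  obtain ⟨q', hq'⟩ : ∃ q', q = q' + 1 := ⟨q - 1, by omega⟩
  rw [hq'] at hd
  have hexp : e * (q' + 1) = e * q' + e := by ring
  have o1 : Odd q' := by
    have := hodd (e * q' + r) (by omega) (by omega)
    rwa [Nat.mul_add_div he, Nat.div_eq_of_lt hr, add_zero] at this
  rcases Nat.eq_zero_or_pos r with h | h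
  · obtain ⟨t, ht⟩ := o1
    refine ⟨t + 1, ?_⟩
    rw [← hd, h, ht]; ring
  · have := hodd (e * (q' + 1)) (by omega) (by omega)
    rw [Nat.mul_div_cancel_left _ he] at this
    rw [Nat.odd_add_one] at this
    exact absurd o1 this

lemma core2 {n N : ℕ} (hn : 1 ≤ n) (hN : N = 2 ^ n + 1) (T U : ZMod N → Prop) (a m b : ZMod N)
    (hT : ∀ k < N, (T (m + k * a) ↔ Odd k))
    (hU : ∀ y, T y ↔ U y ∨ U (y - b)) (hd : ∀ y, ¬ (U y ∧ U (y - b)))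
    (e : ℕ) (he : 0 < e) (heN : 2 * e < N) (hb : b = ((2 * e : ℕ) : ZMod N) * a) :
    ∃ j < n, b = 2 ^ j * a := by
  obtain ⟨n', rfl⟩ : ∃ n', n = n' + 1 := ⟨n - 1, by omega⟩
  have hN2 : N = 2 * 2 ^ n' + 1 := by rw [hN]; ring
  have hpos : 0 < 2 ^ n' := by positivity
  have hdiv : 2 * e ∣ 2 ^ n' := by
    apply tile (2 ^ n') e (fun k => U (m + ((2 * k + 1 : ℕ) : ZMod N) * a)) he hpos
    · intro k hk hke
      have h1 : T (m + ((2 * k + 1 : ℕ) : ZMod N) * a) :=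
        (hT _ (by omega)).2 ⟨k, rfl⟩
      rcases (hU _).1 h1 with h | h
      · exact h
      · exfalso
        have h2 := (hU _).2 (Or.inl h)
        have h3 : m + ((2 * k + 1 : ℕ) : ZMod N) * a - b
            = m + ((N + 2 * k + 1 - 2 * e : ℕ) : ZMod N) * a := by
          rw [Nat.cast_sub (by omega), hb]; push_cast
          simp; ring
        rw [h3, hT _ (by omega)] at h2
        obtain ⟨t, ht⟩ := h2
        omega
    · intro k hk hke
      have h1 : T (m + ((2 * k + 1 : ℕ) : ZMod N) * a) :=
        (hT _ (by omega)).2 ⟨k, rfl⟩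
      have h3 : m + ((2 * k + 1 : ℕ) : ZMod N) * a - b
            = m + ((2 * (k - e) + 1 : ℕ) : ZMod N) * a := by
        rw [hb]; push_cast [Nat.cast_sub hke]; ring
      have h4 := (hU _).1 h1
      have h5 := hd (m + ((2 * k + 1 : ℕ) : ZMod N) * a)
      rw [h3] at h4 h5
      tauto
    · intro k hk hP
      by_contra hlt
      have h2 : T (m + ((2 * k + 1 : ℕ) : ZMod N) * a + b) := by
        rw [hU]; right; simpa using hP
      have h3 : m + ((2 * k + 1 : ℕ) : ZMod N) * a + b
            = m + ((2 * k + 1 + 2 * e - N : ℕ) : ZMod N) * a := by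
        rw [Nat.cast_sub (by omega), hb]; push_cast
        simp; ring
      rw [h3, hT _ (by omega)] at h2
      obtain ⟨t, ht⟩ := h2
      omega
  obtain ⟨j, hj, hje⟩ := (Nat.dvd_prime_pow Nat.prime_two).1 hdiv
  refine ⟨j, by omega, ?_⟩
  rw [hb, hje]; push_cast; rfl

lemma core3 {n N : ℕ} (hn : 1 ≤ n) (hN : N = 2 ^ n + 1) (T U : ZMod N → Prop) (a m b : ZMod N)
    (ha : IsUnit a) (hT : ∀ k < N, (T (m + k * a) ↔ Odd k))
    (hU : ∀ y, T y ↔ U y ∨ U (y - b)) (hd : ∀ y, ¬ (U y ∧ U (y - b)))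
    (hne : ∃ y, U y) :
    ∃ j < n, b = 2 ^ j * a ∨ b = - (2 ^ j * a) := by
  have : NeZero N := ⟨by rw [hN]; exact Nat.succ_ne_zero _⟩
  obtain ⟨v, hv⟩ := hne
  have rep : ∀ y : ZMod N, ∃ k < N, y = m + (k : ℕ) * a := by
    intro y
    obtain ⟨u, rfl⟩ := ha
    refine ⟨((y - m) * (u⁻¹ : (ZMod N)ˣ)).val, ZMod.val_lt _, ?_⟩
    rw [ZMod.natCast_zmod_val, mul_assoc]; simp
  obtain ⟨k, hk, hvk⟩ := rep v
  obtain ⟨k', hk', hvk'⟩ := rep (v + b)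
  have o1 : Odd k := by rw [← hT k hk, ← hvk, hU]; exact Or.inl hv
  have o2 : Odd k' := by rw [← hT k' hk', ← hvk', hU]; right; simpa using hv
  obtain ⟨s, hs⟩ := o1
  obtain ⟨s', hs'⟩ := o2
  rcases lt_trichotomy s s' with h | h | h
  · obtain ⟨j, hj, hb⟩ := core2 hn hN T U a m b hT hU hd (s' - s) (by omega) (by omega) (by
      have : b = (v + b) - v := by ring
      rw [this, hvk', hvk, hs, hs']
      push_cast [Nat.cast_sub h.le]; ring)
    exact ⟨j, hj, Or.inl hb⟩
  · exfalso
    have : b = 0 := by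
      have : b = (v + b) - v := by ring
      rw [this, hvk', hvk, hs, hs', h]; ring
    apply hd v
    rw [this]; simpa using hv
  · obtain ⟨j, hj, hb⟩ := core2 hn hN T (fun y => U (y - b)) a m (-b) hT
      (by intro y; rw [hU]; simp; tauto) (by intro y; have := hd y; simp; tauto)
      (s - s') (by omega) (by omega) (by
      have : -b = v - (v + b) := by ring
      rw [this, hvk', hvk, hs, hs']
      push_cast [Nat.cast_sub h.le]; ring)
    exact ⟨j, hj, Or.inr (by rw [← hb]; ring)⟩

lemma exists_missing {n N : ℕ} (hN : N = 2 ^ n + 1) {A : Finset (ZMod N)}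
    (hA : GoodZ A) (hc : A.card = n) : ∃ m, ∀ y, SubSum A y ↔ y ≠ m := by
  classical
  have : NeZero N := ⟨by rw [hN]; exact Nat.succ_ne_zero _⟩
  let S := A.powerset.image (fun B => ∑ x ∈ B, x)
  have hS : S.card = 2 ^ n := by
    rw [Finset.card_image_of_injOn, Finset.card_powerset, hc]
    intro B hB C hC h
    exact hA B (Finset.mem_powerset.1 hB) C (Finset.mem_powerset.1 hC) h
  have h1 : Sᶜ.card = 1 := by
    rw [Finset.card_compl, hS, ZMod.card]; omega
  obtain ⟨m, hm⟩ := Finset.card_eq_one.1 h1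
  refine ⟨m, fun y => ?_⟩
  have h2 : SubSum A y ↔ y ∈ S := by simp [S, SubSum]
  have h3 : y ∈ Sᶜ ↔ y = m := by rw [hm]; simp
  rw [Finset.mem_compl] at h3
  tauto

lemma good_core {n N : ℕ} (hn : 1 ≤ n) (hN : N = 2 ^ n + 1) {A : Finset (ZMod N)}
    (hA : GoodZ A) (hc : A.card = n) {a : ZMod N} (ha : a ∈ A) :
    IsUnit a ∧ ∀ b ∈ A, ∃ j < n, b = 2 ^ j * a ∨ b = - (2 ^ j * a) := by
  obtain ⟨m, hm⟩ := exists_missing hN hA hc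
  have hodd : Odd N := by
    rw [hN]; exact (Nat.even_pow.2 ⟨even_two, by omega⟩).add_one
  have hmm : ¬ SubSum A m := by rw [hm]; simp
  rw [subSum_split ha] at hmm
  obtain ⟨hu, hT⟩ := core1 hodd (SubSum (A.erase a)) a m (by
    intro y hy
    have h1 := (hm y).2 hy
    rw [subSum_split ha] at h1
    have h2 := subSum_disj hA ha y
    tauto) (by tauto)
  refine ⟨hu, fun b hb => ?_⟩
  by_cases hab : b = a
  · exact ⟨0, by omega, Or.inl (by simp [hab])⟩
  · have hb' : b ∈ A.erase a := Finset.mem_erase.2 ⟨hab, hb⟩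
    exact core3 hn hN (SubSum (A.erase a)) (SubSum ((A.erase a).erase b)) a m b hu hT
      (subSum_split hb') (subSum_disj (hA.mono (Finset.erase_subset _ _)) hb')
      ⟨0, ∅, by simp, by simp⟩

lemma good_neg {n N : ℕ} (hn : 1 ≤ n) (hN : N = 2 ^ n + 1) {A : Finset (ZMod N)}
    (hA : GoodZ A) (hc : A.card = n) {a : ZMod N} (ha : a ∈ A) : -a ∉ A := by
  intro hna
  have hu := (good_core hn hN hA hc ha).1
  have : Fact (1 < N) := ⟨by rw [hN]; have := Nat.one_lt_two_pow (n := n) (by omega); omega⟩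
  have hne : a ≠ -a := by
    intro h
    have h2 : ((2 : ℕ) : ZMod N) * a = 0 := by push_cast; linear_combination h
    have h3 := (hu.mul_left_eq_zero).1 h2
    rw [ZMod.natCast_eq_zero_iff] at h3
    have := Nat.le_of_dvd (by omega) h3
    have := Nat.one_lt_two_pow (n := n) (by omega); omega
  have := hA {a, -a} (by intro x; simp; rintro (rfl | rfl) <;> assumption) ∅ (by simp)
    (by rw [Finset.sum_pair hne]; simp)
  simp at this

/-- The signed powers of two. -/
def gfun {N : ℕ} (u : ZMod N) (J : Finset ℕ) (j : ℕ) : ZMod N :=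
  if j ∈ J then 2 ^ j * u else - (2 ^ j * u)

lemma gfun_sum {n N : ℕ} (hN : N = 2 ^ n + 1) {u : ZMod N} (hu : IsUnit u) (J : Finset ℕ)
    {K L : Finset ℕ} (hK : K ⊆ Finset.range n) (hL : L ⊆ Finset.range n)
    (h : ∑ j ∈ K, gfun u J j = ∑ j ∈ L, gfun u J j) : K = L := by
  classical
  let R := fun K : Finset ℕ => (Finset.range n).filter (fun j => j ∈ J ↔ j ∈ K)
  have hR : ∀ K ⊆ Finset.range n, ∑ j ∈ K, gfun u J j =
      ((∑ j ∈ R K, 2 ^ j : ℕ) : ZMod N) * u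
        - ∑ j ∈ Finset.range n, if j ∈ J then 0 else 2 ^ j * u := by
    intro K hK
    have e1 : ∑ j ∈ K, gfun u J j = ∑ j ∈ Finset.range n, if j ∈ K then gfun u J j else 0 := by
      rw [← Finset.sum_filter]
      congr 1
      ext j; simp only [Finset.mem_filter]
      exact ⟨fun h => ⟨hK h, h⟩, fun h => h.2⟩
    rw [e1]
    push_cast
    rw [Finset.sum_mul, Finset.sum_filter, ← Finset.sum_sub_distrib]
    refine Finset.sum_congr rfl fun j _ => ?_
    by_cases h1 : j ∈ J <;> by_cases h2 : j ∈ K <;> simp [gfun, h1, h2]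
  rw [hR K hK, hR L hL] at h
  have h1 := hu.mul_right_cancel (sub_left_injective h)
  rw [ZMod.natCast_eq_natCast_iff'] at h1
  have hlt : ∀ K : Finset ℕ, ∑ j ∈ R K, 2 ^ j < N := by
    intro K
    have := Nat.geomSum_lt (m := 2) (n := n) (s := R K) le_rfl (by
      intro k hk; exact Finset.mem_range.1 (Finset.mem_filter.1 hk).1)
    omega
  rw [Nat.mod_eq_of_lt (hlt K), Nat.mod_eq_of_lt (hlt L)] at h1
  have h2 : R K = R L := Finset.geomSum_injective (n := 2) le_rfl h1
  ext j
  by_cases hj : j ∈ Finset.range n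
  · have : j ∈ R K ↔ j ∈ R L := by rw [h2]
    simp only [R, Finset.mem_filter, hj, true_and] at this
    tauto
  · exact ⟨fun h => absurd (hK h) hj, fun h => absurd (hL h) hj⟩

lemma gfun_inj {n N : ℕ} (hN : N = 2 ^ n + 1) {u : ZMod N} (hu : IsUnit u) (J : Finset ℕ) :
    Set.InjOn (gfun u J) (Finset.range n : Set ℕ) := by
  intro i hi j hj h
  have := gfun_sum hN hu J (K := {i}) (L := {j}) (by simpa using hi) (by simpa using hj)
    (by simpa using h)
  simpa using this

lemma gfun_good {n N : ℕ} (hN : N = 2 ^ n + 1) {u : ZMod N} (hu : IsUnit u) (J : Finset ℕ) :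
    GoodZ ((Finset.range n).image (gfun u J)) := by
  intro B hB C hC h
  obtain ⟨K, hK, rfl⟩ := Finset.subset_image_iff.1 hB
  obtain ⟨L, hL, rfl⟩ := Finset.subset_image_iff.1 hC
  rw [Finset.sum_image ((gfun_inj hN hu J).mono hK),
    Finset.sum_image ((gfun_inj hN hu J).mono hL)] at h
  rw [gfun_sum hN hu J (by exact_mod_cast hK) (by exact_mod_cast hL) h]

lemma pow_ne_neg {n N : ℕ} (hN : N = 2 ^ n + 1) {u : ZMod N} (hu : IsUnit u)
    {i j : ℕ} (hi : i < n) (hj : j < n) : 2 ^ i * u ≠ - (2 ^ j * u) := by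
  intro h
  have h2 : ((2 ^ i + 2 ^ j : ℕ) : ZMod N) * u = 0 := by push_cast; linear_combination h
  have h3 := (hu.mul_left_eq_zero).1 h2
  rw [ZMod.natCast_eq_zero_iff] at h3
  have h4 := Nat.le_of_dvd (by positivity) h3
  have h5 : 2 ^ i ≤ 2 ^ (n - 1) := Nat.pow_le_pow_right (by norm_num) (by omega)
  have h6 : 2 ^ j ≤ 2 ^ (n - 1) := Nat.pow_le_pow_right (by norm_num) (by omega)
  have h7 : 2 ^ n = 2 * 2 ^ (n - 1) := by rw [← pow_succ']; congr 1; omega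
  omega

lemma mem_image_gfun {n N : ℕ} (hN : N = 2 ^ n + 1) {u : ZMod N} (hu : IsUnit u)
    (J : Finset ℕ) {j : ℕ} (hj : j < n) :
    2 ^ j * u ∈ (Finset.range n).image (gfun u J) ↔ j ∈ J := by
  constructor
  · intro h
    obtain ⟨i, hi, h⟩ := Finset.mem_image.1 h
    have hi' := Finset.mem_range.1 hi
    by_cases hiJ : i ∈ J
    · have hij : gfun u (Finset.range n) i = gfun u (Finset.range n) j := by
        simp only [gfun, hiJ, if_true] at h
        simp [gfun, hi', hj, h]
      have := gfun_inj hN hu (Finset.range n) (by simpa using hi') (by simpa using hj) hij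
      exact this ▸ hiJ
    · simp only [gfun, hiJ, if_false] at h
      exact absurd h.symm (pow_ne_neg hN hu hj hi')
  · intro h
    exact Finset.mem_image.2 ⟨j, Finset.mem_range.2 hj, by simp [gfun, h]⟩

lemma good_val {N : ℕ} [NeZero N] (A : Finset (ZMod N)) :
    SumsetDistinctMod N (A.image ZMod.val) ↔ GoodZ A := by
  have hinj : Function.Injective (ZMod.val : ZMod N → ℕ) := ZMod.val_injective N
  have hs : ∀ B C : Finset (ZMod N), (∑ x ∈ B.image ZMod.val, x) % N = (∑ x ∈ C.image ZMod.val, x) % N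
      ↔ ∑ x ∈ B, x = ∑ x ∈ C, x := by
    intro B C
    rw [← ZMod.natCast_eq_natCast_iff', Finset.sum_image hinj.injOn, Finset.sum_image hinj.injOn]
    push_cast
    simp
  constructor
  · intro h B hB C hC e
    exact Finset.image_injective hinj (h _ (Finset.image_subset_image hB) _
      (Finset.image_subset_image hC) ((hs B C).2 e))
  · intro h B hB C hC e
    obtain ⟨B', hB', rfl⟩ := Finset.subset_image_iff.1 hB
    obtain ⟨C', hC', rfl⟩ := Finset.subset_image_iff.1 hC
    rw [h B' (by exact_mod_cast hB') C' (by exact_mod_cast hC') ((hs B' C').1 e)]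

theorem stmt6 (n : ℕ) (hn : 1 ≤ n) (N : ℕ) (hN : N = 2 ^ n + 1) :
    {A : Finset ℕ | A ⊆ Finset.Icc 1 (N - 1) ∧ A.card = n ∧ SumsetDistinctMod N A}.ncard
      * (2 * n) = 2 ^ n * Nat.totient N := by
  classical
  have : NeZero N := ⟨by rw [hN]; exact Nat.succ_ne_zero _⟩
  have hinj : Function.Injective (ZMod.val : ZMod N → ℕ) := ZMod.val_injective N
  let s : Finset (Finset (ZMod N)) := Finset.univ.filter (fun A => A.card = n ∧ GoodZ A)
  have hset : {A : Finset ℕ | A ⊆ Finset.Icc 1 (N - 1) ∧ A.card = n ∧ SumsetDistinctMod N A}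
      = (fun A : Finset (ZMod N) => A.image ZMod.val) '' (s : Set (Finset (ZMod N))) := by
    ext A
    simp only [Set.mem_ofPred_eq, Set.mem_image, Finset.mem_coe, s, Finset.mem_filter,
      Finset.mem_univ, true_and]
    constructor
    · rintro ⟨h1, h2, h3⟩
      have hA : (A.image (Nat.cast : ℕ → ZMod N)).image ZMod.val = A := by
        rw [Finset.image_image]
        conv_rhs => rw [← Finset.image_id (s := A)]
        apply Finset.image_congr
        intro x hx
        have := Finset.mem_Icc.1 (h1 hx)
        simp only [Function.comp, id]
        exact ZMod.val_cast_of_lt (by omega)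
      refine ⟨A.image (Nat.cast : ℕ → ZMod N), ⟨?_, ?_⟩, hA⟩
      · rw [← Finset.card_image_of_injective _ hinj, hA, h2]
      · rw [← good_val, hA]; exact h3
    · rintro ⟨A, ⟨h1, h2⟩, rfl⟩
      refine ⟨?_, ?_, ?_⟩
      · intro x hx
        obtain ⟨a, ha, rfl⟩ := Finset.mem_image.1 hx
        have h3 := ZMod.val_lt a
        have h4 : a.val ≠ 0 := by
          intro h0
          have ha0 : a = 0 := (ZMod.val_eq_zero a).1 h0
          have := h2 {a} (by simpa using ha) ∅ (by simp) (by simp [ha0])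
          simp at this
        rw [Finset.mem_Icc]; omega
      · rw [Finset.card_image_of_injective _ hinj, h1]
      · exact (good_val A).2 h2
  rw [hset, Set.ncard_image_of_injective _ (Finset.image_injective hinj), Set.ncard_coe_finset]
  have hcard : Nat.totient N = (Finset.univ : Finset (ZMod N)ˣ).card := by
    rw [Finset.card_univ, ZMod.card_units_eq_totient]
  rw [hcard, mul_comm (2 ^ n)]
  apply Finset.card_mul_eq_card_mul (fun (A : Finset (ZMod N)) (u : (ZMod N)ˣ) =>
    (u : ZMod N) ∈ A ∨ -(u : ZMod N) ∈ A)
  · intro A hA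
    obtain ⟨hc, hg⟩ := (Finset.mem_filter.1 hA).2
    have hd : Disjoint A (A.image (fun x => -x)) := by
      rw [Finset.disjoint_left]
      intro x hx hx'
      obtain ⟨y, hy, rfl⟩ := Finset.mem_image.1 hx'
      exact good_neg hn hN hg hc hy hx
    have h1 : (A ∪ A.image (fun x => -x)).card = 2 * n := by
      rw [Finset.card_union_of_disjoint hd, Finset.card_image_of_injective _ neg_injective, hc]
      ring
    rw [← h1, ← Finset.card_image_of_injective _ (Units.val_injective (α := ZMod N))]
    congr 1
    ext x
    simp only [Finset.mem_image, Finset.mem_bipartiteAbove, Finset.mem_univ, true_and,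
      Finset.mem_union]
    constructor
    · rintro ⟨u, h | h, rfl⟩
      · exact Or.inl h
      · exact Or.inr ⟨_, h, by simp⟩
    · rintro (h | ⟨y, h, rfl⟩)
      · obtain ⟨u, rfl⟩ := (good_core hn hN hg hc h).1
        exact ⟨u, Or.inl h, rfl⟩
      · obtain ⟨u, rfl⟩ := (good_core hn hN hg hc h).1
        exact ⟨-u, Or.inr (by simpa using h), by simp⟩
  · intro u _
    have hu : IsUnit (u : ZMod N) := u.isUnit
    have h1 : (Finset.range n).powerset.card = 2 ^ n := by
      rw [Finset.card_powerset, Finset.card_range]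
    rw [← h1]
    symm
    apply Finset.card_bij (fun J _ => (Finset.range n).image (gfun (u : ZMod N) J))
    · intro J hJ
      rw [Finset.mem_bipartiteBelow]
      refine ⟨Finset.mem_filter.2 ⟨Finset.mem_univ _, ?_, gfun_good hN hu J⟩, ?_⟩
      · rw [Finset.card_image_of_injOn (gfun_inj hN hu J), Finset.card_range]
      · have : gfun (u : ZMod N) J 0 ∈ (Finset.range n).image (gfun (u : ZMod N) J) :=
          Finset.mem_image_of_mem _ (Finset.mem_range.2 hn)
        by_cases h0 : 0 ∈ J
        · left; simpa only [gfun, h0, if_true, pow_zero, one_mul] using this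
        · right; simpa only [gfun, h0, if_false, pow_zero, one_mul] using this
    · intro J hJ J' hJ' h
      ext j
      by_cases hj : j < n
      · rw [← mem_image_gfun hN hu J hj, ← mem_image_gfun hN hu J' hj]
        rw [h]
      · have hj' : j ∉ Finset.range n := by simpa using hj
        exact ⟨fun h => absurd (Finset.mem_powerset.1 hJ h) hj',
          fun h => absurd (Finset.mem_powerset.1 hJ' h) hj'⟩
    · intro A hA
      rw [Finset.mem_bipartiteBelow] at hA
      obtain ⟨hA, hr⟩ := hA
      obtain ⟨hc, hg⟩ := (Finset.mem_filter.1 hA).2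
      have hrep : ∀ b ∈ A, ∃ j < n, b = 2 ^ j * (u : ZMod N) ∨ b = - (2 ^ j * (u : ZMod N)) := by
        intro b hb
        rcases hr with h | h
        · exact (good_core hn hN hg hc h).2 b hb
        · obtain ⟨j, hj, h⟩ := (good_core hn hN hg hc h).2 b hb
          refine ⟨j, hj, ?_⟩
          rcases h with h | h
          · right; rw [h]; ring
          · left; rw [h]; ring
      refine ⟨(Finset.range n).filter (fun j => 2 ^ j * (u : ZMod N) ∈ A),
        Finset.mem_powerset.2 (Finset.filter_subset _ _), ?_⟩
      symm
      apply Finset.eq_of_subset_of_card_le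
      · intro b hb
        obtain ⟨j, hj, h⟩ := hrep b hb
        refine Finset.mem_image.2 ⟨j, Finset.mem_range.2 hj, ?_⟩
        rcases h with h | h
        · have : 2 ^ j * (u : ZMod N) ∈ A := h ▸ hb
          simp [gfun, hj, this, h]
        · have : 2 ^ j * (u : ZMod N) ∉ A := by
            have h2 := good_neg hn hN hg hc hb
            rwa [h, neg_neg] at h2
          simp [gfun, this, h]
      · rw [hc]
        exact Finset.card_image_le.trans (by simp)
end
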